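/- arXiv:0805.4353 — 2 statements merged into one kernel-verified Lean document; each statement's English description precedes it below -/
import Mathlib

section
/- Let μ be a subexponential probability measure on ℝ with tail F̄(x) := μ((x,∞)). Then for every a > 0, F̄(x+y)/F̄(x) → 1 as x → ∞ uniformly in y ∈ [-a, a]; that is, sup_{y ∈ [-a,a]} |F̄(x+y)/F̄(x) − 1| → 0 as x → ∞. -/
/-!
Let `X`, `Y` be independent with law `μ`. For `0 < a ≤ x`, splitting `{X + Y > x}` according to
`X ∈ (x, ∞)`, `X ∈ (0, a]` or `X ∈ (a, x]` gives
`(μ ∗ μ)(x, ∞) ≥ F̄(x) + (1 - F̄(a)) F̄(x) + (F̄(a) - F̄(x)) F̄(x - a)`.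
After division by `F̄(x)` the left-hand side tends to `2`, and since `F̄(a) > 0` this forces
`limsup F̄(x - a) / F̄(x) ≤ 1`. Hence `F̄(x - a) / F̄(x) → 1`; replacing `x` by `x + a` and
inverting gives `F̄(x + a) / F̄(x) → 1`, and monotonicity of `F̄` traps all the ratios
`F̄(x + y) / F̄(x)`, `y ∈ [-a, a]`, between these two.
-/

open MeasureTheory Filter Set

/-- A probability measure `μ` on `ℝ` (concentrated on `(0,∞)`) is subexponential if its
tail is positive and the tail of `μ ∗ μ` is asymptotic to twice the tail of `μ`. -/
def Subexponential (μ : Measure ℝ) : Prop :=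
  (∀ x > (0 : ℝ), 0 < μ (Ioi x)) ∧
    Tendsto (fun x : ℝ => ((μ.conv μ) (Ioi x)).toReal / (μ (Ioi x)).toReal)
      atTop (nhds 2)

/-- A function `f : ℝ → ℝ` is long-tailed if each fixed shift leaves it asymptotically unchanged
at `+∞`; for `f` the tail of a measure this is the usual notion of a long-tailed distribution.
Since `x / 0 = 0`, the limit `1` forces `f` to be eventually nonzero. -/
def IsLongTailed (f : ℝ → ℝ) : Prop :=
  ∀ y, Tendsto (fun x => f (x + y) / f x) atTop (nhds 1)

section LongTailed

lemma eventually_ne_zero_of_tendsto_div {ι : Type*} {l : Filter ι} {g f : ι → ℝ} {c : ℝ}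
    (h : Tendsto (fun i => g i / f i) l (nhds c)) (hc : c ≠ 0) : ∀ᶠ i in l, f i ≠ 0 :=
  (h.eventually_ne hc).mono fun _ hi => (div_ne_zero_iff.1 hi).2

variable {f : ℝ → ℝ}

lemma isLongTailed_of_tendsto_sub_div
    (h : ∀ a > 0, Tendsto (fun x => f (x - a) / f x) atTop (nhds 1)) : IsLongTailed f := by
  intro y
  rcases lt_trichotomy y 0 with hneg | rfl | hpos
  · simpa using h (-y) (neg_pos.2 hneg)
  · have hne : ∀ᶠ x in atTop, f x ≠ 0 :=
      eventually_ne_zero_of_tendsto_div (h 1 one_pos) one_ne_zero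
    refine tendsto_const_nhds.congr' (hne.mono fun x hx => ?_)
    simp only [add_zero, div_self hx]
  · have hshift := (h y hpos).comp (tendsto_atTop_add_const_right atTop y tendsto_id)
    simpa [Function.comp_def] using hshift.inv₀ one_ne_zero

lemma iSup_Icc_abs_div_sub_one_le_of_antitone (hanti : Antitone f) {a x : ℝ} (ha : 0 ≤ a)
    (hx : 0 < f x) :
    ⨆ y ∈ Icc (-a) a, |f (x + y) / f x - 1| ≤ f (x + -a) / f x - f (x + a) / f x := by
  have hratio : Antitone fun y => f (x + y) / f x := fun y z hyz =>
    div_le_div_of_nonneg_right (hanti (by linarith)) hx.le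
  have hzero : f (x + 0) / f x = 1 := by rw [add_zero, div_self hx.ne']
  have hleft : 1 ≤ f (x + -a) / f x := hzero ▸ hratio (neg_nonpos.2 ha)
  have hright : f (x + a) / f x ≤ 1 := hzero ▸ hratio ha
  -- For `y ∉ [-a, a]` the inner supremum is over an empty type and equals `0`,
  -- so the bound must also be nonnegative.
  refine Real.iSup_le (fun y => Real.iSup_le (fun hy => ?_) (by linarith)) (by linarith)
  have hlower : f (x + a) / f x ≤ f (x + y) / f x := hratio hy.2
  have hupper : f (x + y) / f x ≤ f (x + -a) / f x := hratio hy.1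
  rw [abs_le]
  constructor <;> linarith

lemma IsLongTailed.tendsto_iSup_Icc_abs_div_sub_one (hf : IsLongTailed f) (hanti : Antitone f)
    (hnonneg : ∀ x, 0 ≤ f x) {a : ℝ} (ha : 0 ≤ a) :
    Tendsto (fun x => ⨆ y ∈ Icc (-a) a, |f (x + y) / f x - 1|) atTop (nhds 0) := by
  have hgap : Tendsto (fun x => f (x + -a) / f x - f (x + a) / f x) atTop (nhds 0) := by
    simpa using (hf (-a)).sub (hf a)
  have hne : ∀ᶠ x in atTop, f x ≠ 0 := eventually_ne_zero_of_tendsto_div (hf 0) one_ne_zero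
  refine squeeze_zero' (Eventually.of_forall fun x => ?_) (hne.mono fun x hx => ?_) hgap
  · exact Real.iSup_nonneg fun y => Real.iSup_nonneg fun _ => abs_nonneg _
  · exact iSup_Icc_abs_div_sub_one_le_of_antitone hanti ha ((hnonneg x).lt_of_ne' hx)

end LongTailed

section Tail

lemma antitone_measureReal_Ioi {α : Type*} [Preorder α] [MeasurableSpace α] (μ : Measure α)
    [IsFiniteMeasure μ] : Antitone fun x => μ.real (Ioi x) :=
  fun _ _ h => measureReal_mono (Ioi_subset_Ioi h)

variable {α : Type*} [LinearOrder α] [TopologicalSpace α] [ClosedIicTopology α]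
  [MeasurableSpace α] [OpensMeasurableSpace α] (μ : Measure α) [IsFiniteMeasure μ]

lemma measureReal_Ioc_eq_sub {a b : α} (hab : a ≤ b) :
    μ.real (Ioc a b) = μ.real (Ioi a) - μ.real (Ioi b) := by
  rw [← Ioi_sdiff_Ioi]
  exact measureReal_sdiff (Ioi_subset_Ioi hab) measurableSet_Ioi

lemma tendsto_measureReal_Ioi_atTop [Nonempty α] [(atTop : Filter α).IsCountablyGenerated] :
    Tendsto (fun x => μ.real (Ioi x)) atTop (nhds 0) := by
  have hempty : ⋂ x : α, Ioi x = ∅ :=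
    eq_empty_of_forall_notMem fun x hx => lt_irrefl x (mem_iInter.1 hx x)
  have hlim : Tendsto (fun x => μ (Ioi x)) atTop (nhds (μ (⋂ x : α, Ioi x))) :=
    tendsto_measure_iInter_atTop (fun _ => measurableSet_Ioi.nullMeasurableSet)
      (fun _ _ h => Ioi_subset_Ioi h) ⟨Classical.arbitrary α, measure_ne_top μ _⟩
  rw [hempty, measure_empty] at hlim
  exact (ENNReal.tendsto_toReal ENNReal.zero_ne_top).comp hlim

end Tail

section Convolution

variable {G : Type*} [AddCommGroup G] [LinearOrder G] [IsOrderedAddMonoid G] [TopologicalSpace G]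
  [ClosedIicTopology G] [MeasurableSpace G] [OpensMeasurableSpace G] [MeasurableAdd₂ G]

lemma conv_Ioi_eq_lintegral (μ ν : Measure G) [SFinite ν] (x : G) :
    (μ.conv ν) (Ioi x) = ∫⁻ s, ν (Ioi (x - s)) ∂μ := by
  rw [Measure.conv, Measure.map_apply measurable_add measurableSet_Ioi,
    Measure.prod_apply (measurable_add measurableSet_Ioi)]
  congr! with s
  ext t
  exact sub_lt_iff_lt_add'.symm

lemma le_conv_Ioi (μ ν : Measure G) [SFinite ν] {a x : G} (ha : 0 ≤ a) (hax : a ≤ x) :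
    ν (Ioi x) * μ (Ioc 0 a) + ν (Ioi (x - a)) * μ (Ioc a x) + ν (Ioi 0) * μ (Ioi x)
      ≤ (μ.conv ν) (Ioi x) := by
  have const_mul_le {s : Set G} (hs : MeasurableSet s) {c : G} (hc : ∀ t ∈ s, x - t ≤ c) :
      ν (Ioi c) * μ s ≤ ∫⁻ t in s, ν (Ioi (x - t)) ∂μ := by
    rw [← setLIntegral_const]
    exact setLIntegral_mono' hs fun t ht => measure_mono (Ioi_subset_Ioi (hc t ht))
  calc
    _ ≤ ∫⁻ t in Ioc 0 a, ν (Ioi (x - t)) ∂μ + ∫⁻ t in Ioc a x, ν (Ioi (x - t)) ∂μ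
          + ∫⁻ t in Ioi x, ν (Ioi (x - t)) ∂μ := by
      gcongr
      · exact const_mul_le measurableSet_Ioc fun t ht => sub_le_self x ht.1.le
      · exact const_mul_le measurableSet_Ioc fun t ht => sub_le_sub_left ht.1.le x
      · exact const_mul_le measurableSet_Ioi fun t ht => sub_nonpos.2 (le_of_lt ht)
    _ = ∫⁻ t in Ioi 0, ν (Ioi (x - t)) ∂μ := by
      rw [← lintegral_union measurableSet_Ioc (Ioc_disjoint_Ioc_of_le le_rfl),
        Ioc_union_Ioc_eq_Ioc ha hax,
        ← lintegral_union measurableSet_Ioi Ioc_disjoint_Ioi_same,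
        Ioc_union_Ioi_eq_Ioi (ha.trans hax)]
    _ ≤ (μ.conv ν) (Ioi x) := by
      rw [conv_Ioi_eq_lintegral]
      exact setLIntegral_le_lintegral _ _

lemma le_measureReal_conv_self_Ioi (μ : Measure G) [IsFiniteMeasure μ] (hμ : μ (Ioi 0) = 1)
    {a x : G} (ha : 0 ≤ a) (hax : a ≤ x) :
    (1 - μ.real (Ioi a)) * μ.real (Ioi x)
        + (μ.real (Ioi a) - μ.real (Ioi x)) * μ.real (Ioi (x - a)) + μ.real (Ioi x)
      ≤ (μ.conv μ).real (Ioi x) := by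
  have hone : μ.real (Ioi 0) = 1 := by rw [measureReal_def, hμ, ENNReal.toReal_one]
  calc
    _ = μ.real (Ioi x) * μ.real (Ioc 0 a) + μ.real (Ioi (x - a)) * μ.real (Ioc a x)
          + μ.real (Ioi 0) * μ.real (Ioi x) := by
      rw [measureReal_Ioc_eq_sub μ ha, measureReal_Ioc_eq_sub μ hax, hone]
      ring
    _ = (μ (Ioi x) * μ (Ioc 0 a) + μ (Ioi (x - a)) * μ (Ioc a x)
          + μ (Ioi 0) * μ (Ioi x)).toReal := by
      rw [ENNReal.toReal_add (by finiteness) (by finiteness),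
        ENNReal.toReal_add (by finiteness) (by finiteness)]
      simp only [ENNReal.toReal_mul, measureReal_def]
    _ ≤ (μ.conv μ).real (Ioi x) :=
      ENNReal.toReal_mono (measure_ne_top _ _) (le_conv_Ioi μ μ ha hax)

lemma measureReal_Ioi_sub_div_le (μ : Measure G) [IsFiniteMeasure μ] (hμ : μ (Ioi 0) = 1)
    {a x : G} (ha : 0 ≤ a) (hax : a ≤ x) (hx : 0 < μ.real (Ioi x))
    (hlt : μ.real (Ioi x) < μ.real (Ioi a)) :
    μ.real (Ioi (x - a)) / μ.real (Ioi x)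
      ≤ ((μ.conv μ).real (Ioi x) / μ.real (Ioi x) - 2 + μ.real (Ioi a))
        / (μ.real (Ioi a) - μ.real (Ioi x)) := by
  have hconv := le_measureReal_conv_self_Ioi μ hμ ha hax
  rw [le_div_iff₀ (sub_pos.2 hlt), div_mul_eq_mul_div, div_le_iff₀ hx, add_mul, sub_mul,
    div_mul_cancel₀ _ hx.ne']
  linarith

end Convolution

namespace Subexponential

variable {μ : Measure ℝ} [IsFiniteMeasure μ]

lemma measureReal_Ioi_pos (hsub : Subexponential μ) {x : ℝ} (hx : 0 < x) : 0 < μ.real (Ioi x) :=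
  ENNReal.toReal_pos (hsub.1 x hx).ne' (measure_ne_top _ _)

lemma tendsto_measureReal_Ioi_sub_div (hsub : Subexponential μ) (hμ : μ (Ioi 0) = 1) {a : ℝ}
    (ha : 0 < a) : Tendsto (fun x => μ.real (Ioi (x - a)) / μ.real (Ioi x)) atTop (nhds 1) := by
  have htail := tendsto_measureReal_Ioi_atTop μ
  have ha_pos : 0 < μ.real (Ioi a) := hsub.measureReal_Ioi_pos ha
  have hconv : Tendsto (fun x => (μ.conv μ).real (Ioi x) / μ.real (Ioi x)) atTop (nhds 2) := hsub.2
  have hbound : Tendsto (fun x => ((μ.conv μ).real (Ioi x) / μ.real (Ioi x) - 2 + μ.real (Ioi a))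
      / (μ.real (Ioi a) - μ.real (Ioi x))) atTop (nhds 1) := by
    have hdenom : μ.real (Ioi a) - 0 ≠ 0 := by simpa using ha_pos.ne'
    simpa [div_self ha_pos.ne', Pi.div_def] using
      ((hconv.sub_const 2).add_const (μ.real (Ioi a))).div (htail.const_sub _) hdenom
  refine tendsto_of_tendsto_of_tendsto_of_le_of_le' tendsto_const_nhds hbound ?_ ?_
  · filter_upwards [eventually_gt_atTop 0] with x hx
    rw [one_le_div (hsub.measureReal_Ioi_pos hx)]
    exact antitone_measureReal_Ioi μ (sub_le_self x ha.le)
  · filter_upwards [eventually_ge_atTop a, htail.eventually_lt_const ha_pos] with x hax hlt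
    exact measureReal_Ioi_sub_div_le μ hμ ha.le hax
      (hsub.measureReal_Ioi_pos (ha.trans_le hax)) hlt

lemma isLongTailed (hsub : Subexponential μ) (hμ : μ (Ioi 0) = 1) :
    IsLongTailed fun x => μ.real (Ioi x) :=
  isLongTailed_of_tendsto_sub_div fun _ ha => hsub.tendsto_measureReal_Ioi_sub_div hμ ha

end Subexponential

theorem stmt2 (μ : Measure ℝ) [IsProbabilityMeasure μ] (hμ : μ (Ioi 0) = 1)
    (hsub : Subexponential μ) (a : ℝ) (ha : 0 < a) :
    Tendsto (fun x : ℝ =>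
        ⨆ y ∈ Icc (-a) a, |(μ (Ioi (x + y))).toReal / (μ (Ioi x)).toReal - 1|)
      atTop (nhds 0) :=
  (hsub.isLongTailed hμ).tendsto_iSup_Icc_abs_div_sub_one (antitone_measureReal_Ioi μ)
    (fun _ => measureReal_nonneg) ha.le
end

section
/- For all t > 0 and all x, y ∈ ℝ, (1/π) ∫_0^∞ e^{-γ t} sin(x√(2γ)) sin(y√(2γ)) (2γ)^{-1/2} dγ = (1 / (2√(2πt))) · ( e^{-(x−y)²/(2t)} − e^{-(x+y)²/(2t)} ). -/
open MeasureTheory Filter Set Real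

/-!
Substituting `s = √(2γ)` turns the integral into `∫₀^∞ exp (-t s² / 2) sin (x s) sin (y s) ds`,
because the weight `(2γ)^(-1/2) dγ` is exactly `ds`. Since
`2 sin (x s) sin (y s) = cos ((x - y) s) - cos ((x + y) s)`, this is a difference of two cosine
transforms of a Gaussian, and by evenness each is half of a Fourier transform over the whole line.
-/

section HalfLine

variable {E : Type*} [NormedAddCommGroup E] [NormedSpace ℝ E]

theorem integral_eq_two_smul_integral_Ioi_of_even {f : ℝ → E} (hf : f.Even) (hfi : Integrable f) :
    ∫ x, f x = (2 : ℝ) • ∫ x in Ioi 0, f x := by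
  have hneg : ∫ x in Iic 0, f x = ∫ x in Ioi 0, f x := by
    simpa only [hf.eq, neg_zero] using integral_comp_neg_Iic 0 f
  rw [← intervalIntegral.integral_Iic_add_Ioi hfi.integrableOn hfi.integrableOn, hneg, two_smul]

theorem integral_Ioi_inv_sqrt_smul_comp_sqrt (g : ℝ → E) :
    ∫ x in Ioi 0, (√x)⁻¹ • g √x = (2 : ℝ) • ∫ s in Ioi 0, g s := by
  rw [← integral_comp_rpow_Ioi_of_pos (g := g) (p := 1 / 2) one_half_pos, ← integral_smul]
  refine setIntegral_congr_fun measurableSet_Ioi fun x hx => ?_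
  have hpow : x ^ ((1 / 2 : ℝ) - 1) = (√x)⁻¹ := by
    rw [sqrt_eq_rpow, ← rpow_neg (mem_Ioi.mp hx).le]
    norm_num
  have hconst : 2 * (1 / 2 * (√x)⁻¹) = (√x)⁻¹ := by ring
  simp only [hpow, smul_smul, ← sqrt_eq_rpow, hconst]

theorem integral_Ioi_inv_sqrt_two_mul_smul_comp_sqrt_two_mul (g : ℝ → E) :
    ∫ x in Ioi 0, (√(2 * x))⁻¹ • g √(2 * x) = ∫ s in Ioi 0, g s := by
  rw [integral_comp_mul_left_Ioi (fun u => (√u)⁻¹ • g √u) 0 two_pos, mul_zero,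
    integral_Ioi_inv_sqrt_smul_comp_sqrt, inv_smul_smul₀ two_ne_zero]

end HalfLine

theorem csqrt_ofReal {r : ℝ} (hr : 0 ≤ r) : Complex.sqrt r = √r := by
  rw [Complex.sqrt_of_nonneg (by exact_mod_cast hr), Complex.ofReal_re]

theorem csqrt_ofReal_mul {r : ℝ} (hr : 0 ≤ r) (z : ℂ) :
    Complex.sqrt (r * z) = √r * Complex.sqrt z := by
  obtain rfl | hr := hr.eq_or_lt
  · simp [Complex.sqrt]
  obtain rfl | hz := eq_or_ne z 0
  · simp [Complex.sqrt]
  have hr0 : (r : ℂ) ≠ 0 := Complex.ofReal_ne_zero.mpr hr.ne'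
  rw [← csqrt_ofReal hr.le]
  simp only [Complex.sqrt]
  rw [Complex.cpow_def_of_ne_zero (mul_ne_zero hr0 hz), Complex.cpow_def_of_ne_zero hr0,
    Complex.cpow_def_of_ne_zero hz, Complex.log_ofReal_mul hr hz, Complex.ofReal_log hr.le,
    add_mul, Complex.exp_add]

theorem csqrt_pi_div_half {t : ℂ} (ht : 0 < t.re) :
    Complex.sqrt (π / (t / 2)) = 2 * π / Complex.sqrt (2 * π * t) := by
  have ht0 : t ≠ 0 := Complex.ne_zero_of_re_pos ht
  have hπ : (π : ℂ) ≠ 0 := Complex.ofReal_ne_zero.mpr pi_ne_zero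
  have hslit : 2 * π * t ∈ Complex.slitPlane := by
    left
    simpa using mul_pos two_pi_pos ht
  have hinv : Complex.sqrt (2 * π * t)⁻¹ = (Complex.sqrt (2 * π * t))⁻¹ :=
    Complex.inv_cpow _ _ (Complex.slitPlane_arg_ne_pi hslit)
  calc Complex.sqrt (π / (t / 2))
    _ = Complex.sqrt (((2 * π) ^ 2 : ℝ) * (2 * π * t)⁻¹) := by
      push_cast
      congr 1
      field_simp
    _ = 2 * π / Complex.sqrt (2 * π * t) := by
      rw [csqrt_ofReal_mul (sq_nonneg _), sqrt_sq two_pi_pos.le, hinv, div_eq_mul_inv]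
      push_cast
      rfl

theorem cexp_mul_ccos_eq_add_div_two (c a s : ℂ) :
    Complex.exp c * Complex.cos (a * s) =
      (Complex.exp (Complex.I * a * s) * Complex.exp c +
        Complex.exp (Complex.I * -a * s) * Complex.exp c) / 2 := by
  rw [Complex.cos]
  ring_nf

section Gaussian

variable {b : ℂ}

theorem integrable_cexp_mul_cexp_neg_mul_sq (hb : 0 < b.re) (a : ℂ) :
    Integrable fun s : ℝ => Complex.exp (Complex.I * a * s) * Complex.exp (-b * s ^ 2) := by
  simpa only [← Complex.exp_add, add_comm, zero_add] using
    integrable_cexp_quadratic hb (Complex.I * a) 0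

theorem integrable_cexp_neg_mul_sq_mul_ccos (hb : 0 < b.re) (a : ℂ) :
    Integrable fun s : ℝ => Complex.exp (-b * s ^ 2) * Complex.cos (a * s) := by
  simp only [cexp_mul_ccos_eq_add_div_two]
  exact ((integrable_cexp_mul_cexp_neg_mul_sq hb a).add
    (integrable_cexp_mul_cexp_neg_mul_sq hb (-a))).div_const 2

theorem integral_cexp_neg_mul_sq_mul_ccos (hb : 0 < b.re) (a : ℂ) :
    ∫ s : ℝ, Complex.exp (-b * s ^ 2) * Complex.cos (a * s) =
      Complex.sqrt (π / b) * Complex.exp (-a ^ 2 / (4 * b)) := by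
  simp only [cexp_mul_ccos_eq_add_div_two]
  rw [integral_div, integral_add (integrable_cexp_mul_cexp_neg_mul_sq hb a)
    (integrable_cexp_mul_cexp_neg_mul_sq hb (-a)), fourierIntegral_gaussian hb,
    fourierIntegral_gaussian hb, neg_sq, add_self_div_two, Complex.sqrt, one_div]

theorem integral_Ioi_cexp_neg_mul_sq_mul_ccos (hb : 0 < b.re) (a : ℂ) :
    ∫ s in Ioi (0 : ℝ), Complex.exp (-b * s ^ 2) * Complex.cos (a * s) =
      Complex.sqrt (π / b) * Complex.exp (-a ^ 2 / (4 * b)) / 2 := by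
  have heven : Function.Even fun s : ℝ => Complex.exp (-b * s ^ 2) * Complex.cos (a * s) := by
    intro s
    simp only [Complex.ofReal_neg, neg_sq, mul_neg, Complex.cos_neg]
  rw [← integral_cexp_neg_mul_sq_mul_ccos hb, integral_eq_two_smul_integral_Ioi_of_even heven
    (integrable_cexp_neg_mul_sq_mul_ccos hb a), Complex.real_smul, Complex.ofReal_ofNat,
    mul_div_cancel_left₀ _ two_ne_zero]

theorem integral_Ioi_cexp_neg_mul_sq_mul_csin_mul_csin (hb : 0 < b.re) (x y : ℂ) :
    ∫ s in Ioi (0 : ℝ), Complex.exp (-b * s ^ 2) * (Complex.sin (x * s) * Complex.sin (y * s)) =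
      Complex.sqrt (π / b) / 4 *
        (Complex.exp (-(x - y) ^ 2 / (4 * b)) - Complex.exp (-(x + y) ^ 2 / (4 * b))) := by
  have hprod (s : ℂ) : Complex.exp (-b * s ^ 2) * (Complex.sin (x * s) * Complex.sin (y * s)) =
      (Complex.exp (-b * s ^ 2) * Complex.cos ((x - y) * s) -
        Complex.exp (-b * s ^ 2) * Complex.cos ((x + y) * s)) / 2 := by
    rw [sub_mul, add_mul, Complex.cos_sub, Complex.cos_add]
    ring
  simp only [hprod]
  rw [integral_div, integral_sub (integrable_cexp_neg_mul_sq_mul_ccos hb _).integrableOn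
    (integrable_cexp_neg_mul_sq_mul_ccos hb _).integrableOn,
    integral_Ioi_cexp_neg_mul_sq_mul_ccos hb, integral_Ioi_cexp_neg_mul_sq_mul_ccos hb]
  ring

end Gaussian

theorem integral_Ioi_cexp_mul_csin_sqrt_mul_csin_sqrt_div_sqrt (t x y : ℂ) :
    ∫ γ in Ioi (0 : ℝ), Complex.exp (-γ * t) * Complex.sin (x * √(2 * γ)) *
        Complex.sin (y * √(2 * γ)) / √(2 * γ) =
      ∫ s in Ioi (0 : ℝ),
        Complex.exp (-(t / 2) * s ^ 2) * (Complex.sin (x * s) * Complex.sin (y * s)) := by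
  refine Eq.trans ?_ (integral_Ioi_inv_sqrt_two_mul_smul_comp_sqrt_two_mul _)
  refine setIntegral_congr_fun measurableSet_Ioi fun γ hγ => ?_
  have hsq : (√(2 * γ) : ℂ) ^ 2 = 2 * γ := by
    exact_mod_cast sq_sqrt (mul_pos two_pos (mem_Ioi.mp hγ)).le
  have hexp : -(t / 2) * (2 * (γ : ℂ)) = -γ * t := by ring
  simp only [hsq, hexp, Complex.real_smul, Complex.ofReal_inv]
  ring

theorem stmt14_general (t x y : ℂ) (ht : 0 < t.re) :
    (1 / π) * ∫ γ in Ioi (0 : ℝ),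
        Complex.exp (-γ * t) * Complex.sin (x * √(2 * γ)) *
          Complex.sin (y * √(2 * γ)) / √(2 * γ)
      = (1 / (2 * Complex.sqrt (2 * π * t))) *
          (Complex.exp (-(x - y) ^ 2 / (2 * t)) - Complex.exp (-(x + y) ^ 2 / (2 * t))) := by
  have hb : 0 < (t / 2).re := by simpa using ht
  have hπ : (π : ℂ) ≠ 0 := Complex.ofReal_ne_zero.mpr pi_ne_zero
  have hden : 4 * (t / 2) = 2 * t := by ring
  rw [integral_Ioi_cexp_mul_csin_sqrt_mul_csin_sqrt_div_sqrt,
    integral_Ioi_cexp_neg_mul_sq_mul_csin_mul_csin hb, csqrt_pi_div_half ht, hden]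
  field_simp
  norm_num

/-- Spectral representation of the transition density of Brownian motion on
`[0,∞)` killed at `0`. -/
theorem stmt14 (t x y : ℝ) (ht : 0 < t) :
    (1 / π) * ∫ γ in Ioi (0 : ℝ),
        Real.exp (-γ * t) * Real.sin (x * Real.sqrt (2 * γ)) *
          Real.sin (y * Real.sqrt (2 * γ)) / Real.sqrt (2 * γ)
      = (1 / (2 * Real.sqrt (2 * π * t))) *
          (Real.exp (-(x - y) ^ 2 / (2 * t)) - Real.exp (-(x + y) ^ 2 / (2 * t))) := by
  have hsqrt : Complex.sqrt (2 * π * t) = √(2 * π * t) := by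
    exact_mod_cast csqrt_ofReal (mul_pos two_pi_pos ht).le
  exact_mod_cast hsqrt ▸ stmt14_general t x y ht
end
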